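/- Let 0 ≤ k < d be integers, let X be a finite set of n points in ℝ^d, let ε > 0, and let S ⊆ X be an ε-approximation of X for the range space of closed double wedges with one vertical boundary. Suppose some k-dimensional affine subspace F* of ℝ^d has regression depth c·n with respect to X, and let F be a k-dimensional affine subspace maximizing regression depth with respect to S. Then the regression depth of F with respect to X is at least (c − 2ε)·n. -/

import Mathlib

noncomputable section

/-- Regression depth of a flat `F` with respect to a finite point set `X`, where
ℝ^d is regarded as ℝ^k × ℝ^(d−k), the first factor carrying the independent
variables: the minimum, over all nonconstant affine functionals `f` vanishing on
`F` and all vertical affine functionals `g = h ∘ π` (with `h` a nonconstant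
affine functional on ℝ^k and `π` the projection onto the first factor), of the
number of points `x ∈ X` with `f x * g x ≤ 0` (the points of `X` in the closed
double wedge bounded by the hyperplane `{f = 0}` containing `F` and the vertical
hyperplane `{g = 0}`). -/
def regDepth {k m : ℕ} (F : AffineSubspace ℝ ((Fin k → ℝ) × (Fin m → ℝ)))
    (X : Finset ((Fin k → ℝ) × (Fin m → ℝ))) : ℕ :=
  sInf { n : ℕ | ∃ f : ((Fin k → ℝ) × (Fin m → ℝ)) →ᵃ[ℝ] ℝ, f.linear ≠ 0 ∧
    (∀ x ∈ F, f x = 0) ∧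
    ∃ h : (Fin k → ℝ) →ᵃ[ℝ] ℝ, h.linear ≠ 0 ∧
      n = {x ∈ (X : Set ((Fin k → ℝ) × (Fin m → ℝ))) | f x * h x.1 ≤ 0}.ncard }

/-- `F` is a (nonempty) affine flat of dimension `j`. -/
def IsFlatOfDim {k m : ℕ} (j : ℕ)
    (F : AffineSubspace ℝ ((Fin k → ℝ) × (Fin m → ℝ))) : Prop :=
  (F : Set ((Fin k → ℝ) × (Fin m → ℝ))).Nonempty ∧ Module.finrank ℝ F.direction = j

/-! The normalized regression depth `regDepth F X / |X|` is an infimum of the relative sizes of the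
double wedges at `F`, and an `ε`-approximation changes each relative size by at most `ε`, so it
changes the normalized depth of every `F` by at most `ε`. Passing from `X` to `S` for `F*`, and back
from `S` to `X` for the deepest flat `F`, costs `2ε`. -/

section WedgeApproximation

variable {k m : ℕ} {F Fstar : AffineSubspace ℝ ((Fin k → ℝ) × (Fin m → ℝ))}
  {f : ((Fin k → ℝ) × (Fin m → ℝ)) →ᵃ[ℝ] ℝ} {h : (Fin k → ℝ) →ᵃ[ℝ] ℝ}
  {X S : Finset ((Fin k → ℝ) × (Fin m → ℝ))} {ε c : ℝ}

/-- The number of points of `X` in the closed double wedge bounded by `{f = 0}` and the vertical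
hyperplane `{h ∘ π = 0}`. -/
def wedgeCount (f : ((Fin k → ℝ) × (Fin m → ℝ)) →ᵃ[ℝ] ℝ) (h : (Fin k → ℝ) →ᵃ[ℝ] ℝ)
    (X : Finset ((Fin k → ℝ) × (Fin m → ℝ))) : ℕ :=
  {x ∈ (X : Set ((Fin k → ℝ) × (Fin m → ℝ))) | f x * h x.1 ≤ 0}.ncard

/-- The pair `(f, h)` bounds one of the double wedges over which the regression depth of `F` is
minimized. -/
structure IsWedgeAt (F : AffineSubspace ℝ ((Fin k → ℝ) × (Fin m → ℝ)))
    (f : ((Fin k → ℝ) × (Fin m → ℝ)) →ᵃ[ℝ] ℝ) (h : (Fin k → ℝ) →ᵃ[ℝ] ℝ) : Prop where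
  linear_ne_zero : f.linear ≠ 0
  eq_zero_of_mem : ∀ x ∈ F, f x = 0
  vertical_linear_ne_zero : h.linear ≠ 0

/-- `S` is an `ε`-approximation of `X` for closed double wedges with one vertical boundary. The
containment `S ⊆ X` is left out, which makes the notion symmetric in `S` and `X`. -/
def IsWedgeApprox (ε : ℝ) (S X : Finset ((Fin k → ℝ) × (Fin m → ℝ))) : Prop :=
  ∀ f : ((Fin k → ℝ) × (Fin m → ℝ)) →ᵃ[ℝ] ℝ, f.linear ≠ 0 →
    ∀ h : (Fin k → ℝ) →ᵃ[ℝ] ℝ, h.linear ≠ 0 →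
      |(wedgeCount f h S : ℝ) / S.card - (wedgeCount f h X : ℝ) / X.card| ≤ ε

lemma IsWedgeApprox.symm (happrox : IsWedgeApprox ε S X) : IsWedgeApprox ε X S :=
  fun f hf h hh => abs_sub_comm (_ : ℝ) _ ▸ happrox f hf h hh

lemma IsWedgeApprox.wedgeCount_div_card_le (happrox : IsWedgeApprox ε S X) (hf : f.linear ≠ 0)
    (hh : h.linear ≠ 0) :
    (wedgeCount f h S : ℝ) / S.card ≤ (wedgeCount f h X : ℝ) / X.card + ε :=
  sub_le_iff_le_add'.mp (le_of_abs_le (happrox f hf h hh))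

lemma regDepth_eq_sInf_wedgeCount (F : AffineSubspace ℝ ((Fin k → ℝ) × (Fin m → ℝ)))
    (X : Finset ((Fin k → ℝ) × (Fin m → ℝ))) :
    regDepth F X = sInf {n | ∃ f h, IsWedgeAt F f h ∧ n = wedgeCount f h X} := by
  refine congrArg sInf (Set.ext fun n => ⟨?_, ?_⟩)
  · rintro ⟨f, hf, hF, h, hh, hn⟩
    exact ⟨f, h, ⟨hf, hF, hh⟩, hn⟩
  · rintro ⟨f, h, ⟨hf, hF, hh⟩, hn⟩
    exact ⟨f, hf, hF, h, hh, hn⟩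

lemma IsWedgeAt.regDepth_le_wedgeCount (hw : IsWedgeAt F f h)
    (X : Finset ((Fin k → ℝ) × (Fin m → ℝ))) : regDepth F X ≤ wedgeCount f h X :=
  (regDepth_eq_sInf_wedgeCount F X).trans_le (Nat.sInf_le ⟨f, h, hw, rfl⟩)

lemma IsWedgeAt.exists_regDepth_eq_wedgeCount (hw : IsWedgeAt F f h)
    (X : Finset ((Fin k → ℝ) × (Fin m → ℝ))) :
    ∃ f' h', IsWedgeAt F f' h' ∧ regDepth F X = wedgeCount f' h' X := by
  rw [regDepth_eq_sInf_wedgeCount]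
  exact Nat.sInf_mem (s := {n | ∃ f h, IsWedgeAt F f h ∧ n = wedgeCount f h X})
    ⟨_, f, h, hw, rfl⟩

lemma exists_isWedgeAt_of_regDepth_ne_zero (hX : regDepth F X ≠ 0) :
    ∃ f h, IsWedgeAt F f h := by
  rw [regDepth_eq_sInf_wedgeCount] at hX
  obtain ⟨_, f, h, hw, _⟩ := Nat.nonempty_of_pos_sInf (Nat.pos_of_ne_zero hX)
  exact ⟨f, h, hw⟩

lemma IsWedgeApprox.regDepth_div_card_le (hε : 0 ≤ ε) (happrox : IsWedgeApprox ε S X)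
    (F : AffineSubspace ℝ ((Fin k → ℝ) × (Fin m → ℝ))) :
    (regDepth F S : ℝ) / S.card ≤ (regDepth F X : ℝ) / X.card + ε := by
  -- Without a double wedge at `F` (`k = 0` or `F = ⊤`), both depths are the junk `sInf ∅ = 0`.
  by_cases hzero : regDepth F S = 0
  · rw [hzero, Nat.cast_zero, zero_div]
    positivity
  obtain ⟨_, _, hw₀⟩ := exists_isWedgeAt_of_regDepth_ne_zero hzero
  obtain ⟨f, h, hw, hX⟩ := hw₀.exists_regDepth_eq_wedgeCount X
  calc (regDepth F S : ℝ) / S.card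
      ≤ (wedgeCount f h S : ℝ) / S.card := by
        gcongr
        exact hw.regDepth_le_wedgeCount S
    _ ≤ (wedgeCount f h X : ℝ) / X.card + ε :=
        happrox.wedgeCount_div_card_le hw.linear_ne_zero hw.vertical_linear_ne_zero
    _ = (regDepth F X : ℝ) / X.card + ε := by rw [hX]

theorem approx_deepest_flat_general (hε : 0 ≤ ε) (happrox : IsWedgeApprox ε S X)
    (hFstar : c * X.card ≤ regDepth Fstar X) (hF : regDepth Fstar S ≤ regDepth F S) :
    (c - 2 * ε) * X.card ≤ (regDepth F X : ℝ) := by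
  obtain hX | hX := X.card.eq_zero_or_pos
  · simp [hX]
  have hn : (0 : ℝ) < X.card := Nat.cast_pos.mpr hX
  have hc : c ≤ (regDepth F X : ℝ) / X.card + ε + ε :=
    calc c ≤ (regDepth Fstar X : ℝ) / X.card := (le_div_iff₀ hn).mpr hFstar
      _ ≤ (regDepth Fstar S : ℝ) / S.card + ε := happrox.symm.regDepth_div_card_le hε Fstar
      _ ≤ (regDepth F S : ℝ) / S.card + ε := by gcongr
      _ ≤ (regDepth F X : ℝ) / X.card + ε + ε := by
        gcongr
        exact happrox.regDepth_div_card_le hε F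
  rw [← le_div_iff₀ hn]
  linarith

end WedgeApproximation

/-- If `S ⊆ X` is an ε-approximation of `X` for closed double wedges with one
vertical boundary, some `k`-flat `F*` has regression depth `c·n` with respect to
`X` (where `n = |X|`), and `F` is a `k`-flat maximizing regression depth with
respect to `S`, then `F` has regression depth at least `(c − 2ε)·n` w.r.t. `X`. -/
theorem approx_deepest_flat (d k : ℕ) (hk : k < d)
    (X S : Finset ((Fin k → ℝ) × (Fin (d - k) → ℝ))) (hSX : S ⊆ X)
    (ε : ℝ) (hε : 0 < ε)
    (happrox : ∀ f : ((Fin k → ℝ) × (Fin (d - k) → ℝ)) →ᵃ[ℝ] ℝ, f.linear ≠ 0 →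
      ∀ h : (Fin k → ℝ) →ᵃ[ℝ] ℝ, h.linear ≠ 0 →
        |({x ∈ (S : Set ((Fin k → ℝ) × (Fin (d - k) → ℝ))) | f x * h x.1 ≤ 0}.ncard : ℝ)
            / S.card -
          ({x ∈ (X : Set ((Fin k → ℝ) × (Fin (d - k) → ℝ))) | f x * h x.1 ≤ 0}.ncard : ℝ)
            / X.card| ≤ ε)
    (c : ℝ) (Fstar : AffineSubspace ℝ ((Fin k → ℝ) × (Fin (d - k) → ℝ)))
    (hFstar : IsFlatOfDim k Fstar) (hFstarDepth : (regDepth Fstar X : ℝ) = c * X.card)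
    (F : AffineSubspace ℝ ((Fin k → ℝ) × (Fin (d - k) → ℝ))) (hF : IsFlatOfDim k F)
    (hFmax : ∀ F' : AffineSubspace ℝ ((Fin k → ℝ) × (Fin (d - k) → ℝ)),
      IsFlatOfDim k F' → regDepth F' S ≤ regDepth F S) :
    (c - 2 * ε) * X.card ≤ (regDepth F X : ℝ) :=
  approx_deepest_flat_general hε.le happrox hFstarDepth.ge (hFmax Fstar hFstar)
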